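/- For every countable set X, every bound N ∈ ℕ, and every function g from multisets over X of cardinality at most N to a set Y, there exist a function f : X → ℝ and a function φ : ℝ → Y such that g(M) = φ( Σ_{x ∈ M} f(x) ) for every multiset M over X of cardinality at most N; i.e., any multiset function on bounded-size multisets decomposes as a univariate function of a sum of per-element features. -/

import Mathlib

/-!
A multiset over `X` is a vector of `X →₀ ℕ`, and `M ↦ ∑ x ∈ M, f x` is the `ℕ`-linear map
determined by `f`. So the sum remembers the whole multiset exactly when `f` is linearly independent
over `ℕ`, and then every `g` factors through it. Since `ℝ` has dimension continuum over `ℚ`, such an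
`f : X → ℝ` exists as soon as `X` has at most continuum many elements.
-/

open Cardinal

universe u v w

theorem sum_map_toMultiset_eq_linearCombination {X A : Type*} [AddCommMonoid A] (f : X → A)
    (c : X →₀ ℕ) : (c.toMultiset.map f).sum = Finsupp.linearCombination ℕ f c := by
  rw [Finsupp.toMultiset_map, Finsupp.sum_toMultiset,
    Finsupp.sum_mapDomain_index zero_nsmul add_nsmul,
    Finsupp.linearCombination_apply]

theorem injective_multiset_sum_map_iff_linearIndependent {X A : Type*} [AddCommMonoid A]
    {f : X → A} :
    Function.Injective (fun M : Multiset X => (M.map f).sum) ↔ LinearIndependent ℕ f := by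
  classical
  rw [LinearIndependent, ← funext (sum_map_toMultiset_eq_linearCombination f)]
  exact (Multiset.toFinsupp.symm.toEquiv.injective_comp _).symm

theorem exists_linearIndependent_of_lift_mk_le_lift_rank {R : Type u} {M : Type v} {ι : Type w}
    [Semiring R] [StrongRankCondition R] [AddCommMonoid M] [Module R M] [Module.Free R M]
    (h : lift.{v} #ι ≤ lift.{w} (Module.rank R M)) : ∃ f : ι → M, LinearIndependent R f := by
  rw [Module.Free.rank_eq_card_chooseBasisIndex, lift_mk_le'] at h
  obtain ⟨i⟩ := h
  exact ⟨Module.Free.chooseBasis R M ∘ i,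
    (Module.Free.chooseBasis R M).linearIndependent.comp i i.injective⟩

theorem exists_real_injective_multiset_sum_map {X : Type*} (hX : #X ≤ 𝔠) :
    ∃ f : X → ℝ, Function.Injective (fun M : Multiset X => (M.map f).sum) := by
  obtain ⟨f, hf⟩ : ∃ f : X → ℝ, LinearIndependent ℚ f :=
    exists_linearIndependent_of_lift_mk_le_lift_rank <| by simpa [Real.rank_rat_real] using hX
  exact ⟨f, injective_multiset_sum_map_iff_linearIndependent.2 (hf.restrict_scalars' ℕ)⟩

theorem multiset_function_decomposition_general {X : Type*} (hX : #X ≤ 𝔠) (Y : Type*) :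
    ∃ f : X → ℝ, ∀ g : Multiset X → Y, ∃ φ : ℝ → Y, ∀ M : Multiset X, g M = φ ((M.map f).sum) := by
  obtain ⟨f, hf⟩ := exists_real_injective_multiset_sum_map hX
  refine ⟨f, fun g => ?_⟩
  have : Nonempty Y := ⟨g 0⟩
  obtain ⟨φ, hφ⟩ := (Function.factorsThrough_iff g).1 (hf.factorsThrough g)
  exact ⟨φ, congrFun hφ⟩

/-- Any multiset function `g` on bounded-size multisets over a countable set
decomposes as `g(M) = φ(Σ_{x ∈ M} f(x))` for some per-element feature map
`f : X → ℝ` and univariate readout `φ : ℝ → Y`. -/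
theorem multiset_function_decomposition (X : Type*) [Countable X] (N : ℕ)
    (Y : Type*) (g : Multiset X → Y) :
    ∃ (f : X → ℝ) (φ : ℝ → Y),
      ∀ M : Multiset X, Multiset.card M ≤ N → g M = φ ((M.map f).sum) := by
  have hX : #X ≤ 𝔠 := mk_le_aleph0.trans aleph0_le_continuum
  obtain ⟨f, hf⟩ := multiset_function_decomposition_general hX Y
  exact ⟨f, (hf g).imp fun _ hφ M _ => hφ M⟩
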